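/- arXiv:2602.17233 — 2 statements merged into one kernel-verified Lean document; each statement's English description precedes it below -/
import Mathlib

section
/- Let s₀, s₁, s₂ ∈ ℝ, let k₁ > 0, let ν ∈ ℝ³ be a unit vector, and let Q be a real symmetric traceless 3×3 matrix with ‖Q‖ > k₁. Set Q̃ := (k₁/‖Q‖) Q. Then f_S(Q) − f_S(Q̃) = (‖Q‖ − k₁) · [ s₁ ( (‖Q‖ + k₁) ‖Qν‖²/‖Q‖² + (2/3) s₀ (νᵀQν)/‖Q‖ ) + s₂ (‖Q‖ + k₁)(‖Q‖² + k₁² − (4/3) s₀²) ]. -/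
open Matrix

/-- Frobenius norm of a real 3×3 matrix: `‖A‖ = √(tr(Aᵀ A))`. -/
noncomputable def frobNorm (A : Matrix (Fin 3) (Fin 3) ℝ) : ℝ :=
  Real.sqrt (Matrix.trace (Aᵀ * A))

/-- Surface energy density `f_S(Q) = s₁ ‖Q^{(s₀)} − P Q^{(s₀)}‖² + s₂ (‖Q^{(s₀)}‖² − s₀²)²`,
where `Q^{(s₀)} = Q + (s₀/3) I₃` and `P = I₃ − ν νᵀ`. -/
noncomputable def fS (s₀ s₁ s₂ : ℝ) (ν : Fin 3 → ℝ) (Q : Matrix (Fin 3) (Fin 3) ℝ) : ℝ :=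
  s₁ * frobNorm ((Q + (s₀ / 3) • (1 : Matrix (Fin 3) (Fin 3) ℝ)) -
      ((1 : Matrix (Fin 3) (Fin 3) ℝ) - vecMulVec ν ν) *
        (Q + (s₀ / 3) • (1 : Matrix (Fin 3) (Fin 3) ℝ))) ^ 2 +
  s₂ * (frobNorm (Q + (s₀ / 3) • (1 : Matrix (Fin 3) (Fin 3) ℝ)) ^ 2 - s₀ ^ 2) ^ 2

/-!
For a unit vector `ν`, the matrix `A - (1 - ννᵀ) A` is the rank-one matrix `ν (Aᵀν)ᵀ`, so its
squared Frobenius norm is `‖Aᵀν‖²`. On symmetric traceless `Q` this makes `f_S(Q)` a polynomial in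
`‖Qν‖²`, `νᵀQν` and `‖Q‖²`, which are homogeneous in `Q` of degrees 2, 1 and 2, so scaling `Q` by
`k / ‖Q‖` changes each term by a multiple of `‖Q‖ - k`.
-/

section Algebra

variable {m n R : Type*} [Fintype n]

lemma trace_transpose_vecMulVec_mul_self [CommSemiring R] [Fintype m] (u : m → R) (v : n → R) :
    trace ((vecMulVec u v)ᵀ * vecMulVec u v) = (u ⬝ᵥ u) * (v ⬝ᵥ v) := by
  rw [transpose_vecMulVec, vecMulVec_mul_vecMulVec, trace_vecMulVec, dotProduct_smul, smul_eq_mul]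

lemma trace_transpose_add_smul_one_mul_self [CommSemiring R] [DecidableEq n]
    (A : Matrix n n R) (c : R) :
    trace ((A + c • 1)ᵀ * (A + c • 1)) =
      trace (Aᵀ * A) + 2 * c * trace A + c ^ 2 * Fintype.card n := by
  simp only [transpose_add, transpose_smul, transpose_one, add_mul, mul_add, Matrix.smul_mul,
    Matrix.mul_smul, one_mul, mul_one, trace_add, trace_smul, trace_transpose, trace_one,
    smul_eq_mul]
  ring

lemma sub_one_sub_vecMulVec_mul [Ring R] [DecidableEq n] (u v : n → R) (A : Matrix n m R) :
    A - (1 - vecMulVec u v) * A = vecMulVec u (v ᵥ* A) := by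
  rw [Matrix.sub_mul, Matrix.one_mul, sub_sub_cancel, vecMulVec_mul]

lemma add_smul_dotProduct_self [CommSemiring R] (v w : n → R) (c : R) :
    (v + c • w) ⬝ᵥ (v + c • w) = v ⬝ᵥ v + 2 * c * (w ⬝ᵥ v) + c ^ 2 * (w ⬝ᵥ w) := by
  simp only [add_dotProduct, dotProduct_add, smul_dotProduct, dotProduct_smul, smul_eq_mul,
    dotProduct_comm v w]
  ring

end Algebra

section Frobenius

variable (A : Matrix (Fin 3) (Fin 3) ℝ)

lemma frobNorm_sq : frobNorm A ^ 2 = trace (Aᵀ * A) := by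
  have trace_nonneg : 0 ≤ trace (Aᵀ * A) := by
    simpa only [conjTranspose_eq_transpose_of_trivial] using
      (posSemidef_conjTranspose_mul_self A).trace_nonneg
  exact Real.sq_sqrt trace_nonneg

lemma frobNorm_smul_sq (c : ℝ) : frobNorm (c • A) ^ 2 = c ^ 2 * frobNorm A ^ 2 := by
  simp only [frobNorm_sq, transpose_smul, Matrix.smul_mul, Matrix.mul_smul, trace_smul, smul_eq_mul]
  ring

lemma frobNorm_add_smul_one_sq (c : ℝ) :
    frobNorm (A + c • 1) ^ 2 = frobNorm A ^ 2 + 2 * c * trace A + 3 * c ^ 2 := by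
  rw [frobNorm_sq, trace_transpose_add_smul_one_mul_self, ← frobNorm_sq, Fintype.card_fin,
    Nat.cast_ofNat, mul_comm (c ^ 2)]

lemma frobNorm_sub_one_sub_vecMulVec_mul_sq (u v : Fin 3 → ℝ) :
    frobNorm (A - (1 - vecMulVec u v) * A) ^ 2 = (u ⬝ᵥ u) * ((v ᵥ* A) ⬝ᵥ (v ᵥ* A)) := by
  rw [sub_one_sub_vecMulVec_mul, frobNorm_sq, trace_transpose_vecMulVec_mul_self]

end Frobenius

section SurfaceEnergy

variable {ν : Fin 3 → ℝ} {Q : Matrix (Fin 3) (Fin 3) ℝ}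

lemma fS_eq_of_isSymm_of_trace_eq_zero (s₀ s₁ s₂ : ℝ) (hν : ν ⬝ᵥ ν = 1) (hsymm : Q.IsSymm)
    (htrace : trace Q = 0) :
    fS s₀ s₁ s₂ ν Q =
      s₁ * ((Q *ᵥ ν) ⬝ᵥ (Q *ᵥ ν) + 2 / 3 * s₀ * (ν ⬝ᵥ Q *ᵥ ν) + s₀ ^ 2 / 9) +
        s₂ * (frobNorm Q ^ 2 - 2 / 3 * s₀ ^ 2) ^ 2 := by
  have vecMul_shift : ν ᵥ* (Q + (s₀ / 3) • 1) = Q *ᵥ ν + (s₀ / 3) • ν := by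
    rw [vecMul_add, vecMul_smul, vecMul_one, ← mulVec_transpose, hsymm.eq]
  rw [fS, frobNorm_sub_one_sub_vecMulVec_mul_sq, vecMul_shift, add_smul_dotProduct_self,
    frobNorm_add_smul_one_sq, hν, htrace]
  ring

lemma fS_smul_of_isSymm_of_trace_eq_zero (s₀ s₁ s₂ t : ℝ) (hν : ν ⬝ᵥ ν = 1) (hsymm : Q.IsSymm)
    (htrace : trace Q = 0) :
    fS s₀ s₁ s₂ ν (t • Q) =
      s₁ * (t ^ 2 * ((Q *ᵥ ν) ⬝ᵥ (Q *ᵥ ν)) + 2 / 3 * s₀ * t * (ν ⬝ᵥ Q *ᵥ ν) + s₀ ^ 2 / 9) +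
        s₂ * (t ^ 2 * frobNorm Q ^ 2 - 2 / 3 * s₀ ^ 2) ^ 2 := by
  have trace_smul_eq_zero : trace (t • Q) = 0 := by rw [trace_smul, htrace, smul_zero]
  rw [fS_eq_of_isSymm_of_trace_eq_zero s₀ s₁ s₂ hν (hsymm.smul t) trace_smul_eq_zero,
    frobNorm_smul_sq]
  simp only [smul_mulVec, smul_dotProduct, dotProduct_smul, smul_eq_mul]
  ring

end SurfaceEnergy

theorem stmt_2_general (s₀ s₁ s₂ k : ℝ) (ν : Fin 3 → ℝ) (hν : ν ⬝ᵥ ν = 1)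
    (Q : Matrix (Fin 3) (Fin 3) ℝ) (hsymm : Q.IsSymm) (htrace : trace Q = 0)
    (hQ : frobNorm Q ≠ 0) :
    fS s₀ s₁ s₂ ν Q - fS s₀ s₁ s₂ ν ((k / frobNorm Q) • Q) =
      (frobNorm Q - k) *
        (s₁ * ((frobNorm Q + k) * ((Q *ᵥ ν) ⬝ᵥ (Q *ᵥ ν)) / frobNorm Q ^ 2 +
            (2 / 3) * s₀ * (ν ⬝ᵥ Q *ᵥ ν) / frobNorm Q) +
          s₂ * (frobNorm Q + k) * (frobNorm Q ^ 2 + k ^ 2 - (4 / 3) * s₀ ^ 2)) := by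
  rw [fS_eq_of_isSymm_of_trace_eq_zero s₀ s₁ s₂ hν hsymm htrace,
    fS_smul_of_isSymm_of_trace_eq_zero s₀ s₁ s₂ _ hν hsymm htrace]
  field_simp
  ring

theorem stmt_2 (s₀ s₁ s₂ k₁ : ℝ) (hk₁ : 0 < k₁) (ν : Fin 3 → ℝ) (hν : ν ⬝ᵥ ν = 1)
    (Q : Matrix (Fin 3) (Fin 3) ℝ) (hsymm : Qᵀ = Q) (htrace : Matrix.trace Q = 0)
    (hbig : k₁ < frobNorm Q) :
    fS s₀ s₁ s₂ ν Q - fS s₀ s₁ s₂ ν ((k₁ / frobNorm Q) • Q) =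
      (frobNorm Q - k₁) *
        (s₁ * ((frobNorm Q + k₁) * ((Q.mulVec ν) ⬝ᵥ (Q.mulVec ν)) / frobNorm Q ^ 2 +
            (2 / 3) * s₀ * (ν ⬝ᵥ Q.mulVec ν) / frobNorm Q) +
          s₂ * (frobNorm Q + k₁) * (frobNorm Q ^ 2 + k₁ ^ 2 - (4 / 3) * s₀ ^ 2)) :=
  stmt_2_general s₀ s₁ s₂ k₁ ν hν Q hsymm htrace (hk₁.trans hbig).ne'
end

section
/- Let m ≥ 1, ρ > 0, q ∈ ℝᵐ, and let u : ℝ² → ℝᵐ be harmonic on an open set containing the closed disk of radius ρ centered at the origin. Then ∫_{D_ρ} ‖u(x) − q‖² dx ≤ (ρ²/2) ∫₀^{2π} ‖u(ρ cos θ, ρ sin θ) − q‖² dθ. -/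
open MeasureTheory

/-- The point `(ρ cos θ, ρ sin θ)` of the circle of radius `ρ` in `ℝ²`. -/
noncomputable def circlePt (ρ θ : ℝ) : EuclideanSpace ℝ (Fin 2) :=
  EuclideanSpace.single 0 (ρ * Real.cos θ) + EuclideanSpace.single 1 (ρ * Real.sin θ)

/-!
For a harmonic map `f` and a continuous convex function `Φ`, the Poisson formula writes `f w` as an
average of `f` over a circle `|z - c| = R` against a probability density in `z`, so Jensen's
inequality bounds `Φ (f w)` by the Poisson average of `Φ ∘ f`. The Poisson kernel is symmetric in
the two angles, so averaging this bound over `|w - c| = r` shows that the circle averages of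
`Φ ∘ f` increase with the radius. Integrating in polar coordinates, the integral of `Φ ∘ f` over
the disk is at most `π R²` times the average over the boundary circle. The theorem is the case
`Φ = ‖· - q‖²`.
-/

section Proof

open Set Metric Real InnerProductSpace Laplacian

variable {F : Type*} [NormedAddCommGroup F] [NormedSpace ℝ F]

theorem convexOn_norm_sub_sq (q : F) : ConvexOn ℝ univ fun y : F => ‖y - q‖ ^ 2 := by
  simp only [← dist_eq_norm]
  exact (convexOn_univ_dist q).pow (fun _ _ => dist_nonneg) 2

section Jensen

variable {α : Type*} [MeasurableSpace α] {μ : Measure α} {w : α → ℝ}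

theorem integral_withDensity_ofReal (hw : AEMeasurable w μ) (hw_nonneg : 0 ≤ᵐ[μ] w) (g : α → F) :
    ∫ x, g x ∂μ.withDensity (fun x => ENNReal.ofReal (w x)) = ∫ x, w x • g x ∂μ := by
  rw [integral_withDensity_eq_integral_toReal_smul₀ hw.ennreal_ofReal
    (.of_forall fun _ => ENNReal.ofReal_lt_top)]
  refine integral_congr_ae ?_
  filter_upwards [hw_nonneg] with x hx
  rw [ENNReal.toReal_ofReal hx]

theorem integrable_withDensity_ofReal_iff (hw : AEMeasurable w μ) (hw_nonneg : 0 ≤ᵐ[μ] w)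
    {g : α → F} :
    Integrable g (μ.withDensity fun x => ENNReal.ofReal (w x)) ↔
      Integrable (fun x => w x • g x) μ := by
  rw [integrable_withDensity_iff_integrable_smul₀' hw.ennreal_ofReal
    (.of_forall fun _ => ENNReal.ofReal_lt_top)]
  refine integrable_congr ?_
  filter_upwards [hw_nonneg] with x hx
  rw [ENNReal.toReal_ofReal hx]

theorem isProbabilityMeasure_withDensity_ofReal (hw_nonneg : 0 ≤ᵐ[μ] w)
    (hw_one : ∫ x, w x ∂μ = 1) :
    IsProbabilityMeasure (μ.withDensity fun x => ENNReal.ofReal (w x)) := by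
  have hw : Integrable w μ := .of_integral_ne_zero (by simp [hw_one])
  constructor
  rw [withDensity_apply _ .univ, setLIntegral_univ,
    ← ofReal_integral_eq_lintegral_ofReal hw hw_nonneg, hw_one, ENNReal.ofReal_one]

theorem map_integral_smul_le_of_convexOn [CompleteSpace F] {f : α → F} {Φ : F → ℝ}
    (hΦ : ConvexOn ℝ univ Φ) (hΦc : Continuous Φ) (hw_nonneg : 0 ≤ᵐ[μ] w)
    (hw_one : ∫ x, w x ∂μ = 1) (hf : Integrable (fun x => w x • f x) μ)
    (hΦf : Integrable (fun x => w x * Φ (f x)) μ) :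
    Φ (∫ x, w x • f x ∂μ) ≤ ∫ x, w x * Φ (f x) ∂μ := by
  have hw : AEMeasurable w μ :=
    (Integrable.of_integral_ne_zero (by simp [hw_one])).aemeasurable
  have := isProbabilityMeasure_withDensity_ofReal hw_nonneg hw_one
  have jensen := hΦ.map_integral_le hΦc.continuousOn isClosed_univ
    (.of_forall fun x => mem_univ (f x))
    ((integrable_withDensity_ofReal_iff hw hw_nonneg).2 hf)
    ((integrable_withDensity_ofReal_iff hw hw_nonneg).2 hΦf)
  simpa only [integral_withDensity_ofReal hw hw_nonneg, smul_eq_mul] using jensen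

theorem map_circleAverage_smul_le_of_convexOn [CompleteSpace F] {Φ : F → ℝ} {k : ℂ → ℝ}
    {f : ℂ → F} {c : ℂ} {R : ℝ} (hΦ : ConvexOn ℝ univ Φ) (hΦc : Continuous Φ)
    (hk_nonneg : ∀ z ∈ sphere c |R|, 0 ≤ k z) (hk_one : circleAverage k c R = 1)
    (hf : CircleIntegrable (k • f) c R) (hΦf : CircleIntegrable (k * Φ ∘ f) c R) :
    Φ (circleAverage (k • f) c R) ≤ circleAverage (k * Φ ∘ f) c R := by
  rw [circleAverage_eq_intervalAverage] at hk_one ⊢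
  rw [circleAverage_eq_intervalAverage]
  exact map_integral_smul_le_of_convexOn hΦ hΦc
    (.of_forall fun θ => hk_nonneg _ (circleMap_mem_sphere' c R θ)) hk_one
    (intervalIntegrable_iff.1 hf).to_average (intervalIntegrable_iff.1 hΦf).to_average

end Jensen

section CircleAverage

variable {c d : ℂ} {r R : ℝ}

theorem continuous_comp_circleMap_circleMap {X : Type*} [TopologicalSpace X] {k : ℂ → ℂ → X}
    (hk : ContinuousOn (fun p : ℂ × ℂ => k p.1 p.2) (sphere c |r| ×ˢ sphere d |R|)) :
    Continuous fun p : ℝ × ℝ => k (circleMap c r p.1) (circleMap d R p.2) :=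
  hk.comp_continuous (f := fun p : ℝ × ℝ => (circleMap c r p.1, circleMap d R p.2))
    (by fun_prop) fun p => ⟨circleMap_mem_sphere' c r p.1, circleMap_mem_sphere' d R p.2⟩

theorem circleIntegrable_circleAverage {k : ℂ → ℂ → F}
    (hk : ContinuousOn (fun p : ℂ × ℂ => k p.1 p.2) (sphere c |r| ×ˢ sphere d |R|)) :
    CircleIntegrable (fun w => circleAverage (k w) d R) c r :=
  ((intervalIntegral.continuous_parametric_intervalIntegral_of_continuous'
    (continuous_comp_circleMap_circleMap hk) 0 (2 * π)).const_smul _).intervalIntegrable _ _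

theorem circleAverage_circleAverage_comm {k : ℂ → ℂ → F}
    (hk : ContinuousOn (fun p : ℂ × ℂ => k p.1 p.2) (sphere c |r| ×ˢ sphere d |R|)) :
    circleAverage (fun w => circleAverage (k w) d R) c r =
      circleAverage (fun z => circleAverage (fun w => k w z) c r) d R := by
  have hint : IntegrableOn (fun p : ℝ × ℝ => k (circleMap c r p.1) (circleMap d R p.2))
      (uIoc 0 (2 * π) ×ˢ uIoc 0 (2 * π)) :=
    ((continuous_comp_circleMap_circleMap hk).continuousOn.integrableOn_compact
      (isCompact_uIcc.prod isCompact_uIcc)).mono_set (prod_mono uIoc_subset_uIcc uIoc_subset_uIcc)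
  simp only [circleAverage_def, intervalIntegral.integral_smul]
  rw [intervalIntegral_intervalIntegral_swap]
  exact hint

theorem continuousOn_circleAverage_of_closedBall {g : ℂ → F}
    (hg : ContinuousOn g (closedBall c R)) : ContinuousOn (circleAverage g c) (Icc 0 R) :=
  .circleAverage (hg.mono fun _ hz => mem_closedBall_iff_norm.2 hz.2) fun _ hr => hr.1

end CircleAverage

section PoissonKernel

variable {c w z : ℂ} {r R : ℝ} {f : ℂ → F}

theorem poissonKernel_nonneg (h : ‖w - c‖ ≤ ‖z - c‖) : 0 ≤ poissonKernel c w z := by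
  rw [poissonKernel_def]
  exact div_nonneg (sub_nonneg.2 (by gcongr)) (by positivity)

theorem continuousOn_poissonKernel (c : ℂ) :
    ContinuousOn (fun p : ℂ × ℂ => poissonKernel c p.1 p.2) {p | p.1 ≠ p.2} := by
  simp only [poissonKernel_def, sub_sub_sub_cancel_right]
  refine .div (by fun_prop) (by fun_prop) fun p hp => ?_
  exact pow_ne_zero 2 (norm_ne_zero_iff.2 (sub_ne_zero.2 (Ne.symm hp)))

theorem continuousOn_poissonKernel_sphere (hw : w ∈ ball c R) :
    ContinuousOn (poissonKernel c w) (sphere c R) :=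
  (continuousOn_poissonKernel c).comp (f := fun z => (w, z)) (by fun_prop) fun z hz h =>
    (mem_ball.1 hw).ne (Eq.trans (congrArg (dist · c) h) (mem_sphere.1 hz))

theorem continuousOn_poissonKernel_mul {g : ℂ → ℝ} (hr : |r| < R)
    (hg : ContinuousOn g (sphere c R)) :
    ContinuousOn (fun p : ℂ × ℂ => poissonKernel c p.1 p.2 * g p.2)
      (sphere c |r| ×ˢ sphere c |R|) := by
  rw [abs_of_pos ((abs_nonneg r).trans_lt hr)]
  refine .mul ((continuousOn_poissonKernel c).mono ?_) (hg.comp continuousOn_snd fun p hp => hp.2)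
  rintro ⟨w, z⟩ ⟨hw, hz⟩ (rfl : w = z)
  exact hr.ne (hw.symm.trans hz)

theorem poissonKernel_circleMap_comm (c : ℂ) (r R φ θ : ℝ) :
    poissonKernel c (circleMap c r φ) (circleMap c R θ) =
      poissonKernel c (circleMap c r θ) (circleMap c R φ) := by
  have norm_sub_sq (φ θ : ℝ) : ‖circleMap 0 R θ - circleMap 0 r φ‖ ^ 2 =
      R ^ 2 + r ^ 2 - 2 * R * r * cos (θ - φ) := by
    rw [← Complex.normSq_eq_norm_sq, circleMap_zero, circleMap_zero, Complex.normSq_apply, cos_sub]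
    simp only [Complex.sub_re, Complex.sub_im, Complex.re_ofReal_mul, Complex.im_ofReal_mul,
      Complex.exp_ofReal_mul_I_re, Complex.exp_ofReal_mul_I_im]
    linear_combination R ^ 2 * sin_sq_add_cos_sq θ + r ^ 2 * sin_sq_add_cos_sq φ
  simp only [poissonKernel_def, circleMap_sub_center, norm_circleMap_zero, norm_sub_sq]
  rw [← cos_neg, neg_sub]

theorem circleAverage_poissonKernel (hw : w ∈ ball c R) :
    circleAverage (poissonKernel c w) c R = 1 := by
  have h := HarmonicContOnCl.circleAverage_poissonKernel_smul (f := fun _ => (1 : ℝ))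
    harmonicContOnCl_const hw
  simpa only [← Pi.one_def, smul_eq_mul, mul_one] using h

theorem circleAverage_poissonKernel_left (hr : |r| < R) (hz : z ∈ sphere c R) :
    circleAverage (fun w => poissonKernel c w z) c r = 1 := by
  obtain ⟨φ, rfl⟩ : z ∈ range (circleMap c R) := by
    rwa [range_circleMap, abs_of_pos ((abs_nonneg r).trans_lt hr)]
  have hw : circleMap c r φ ∈ ball c R := by simpa [dist_eq_norm] using hr
  rw [← circleAverage_poissonKernel hw]
  simp only [circleAverage_def, poissonKernel_circleMap_comm c r R _ φ]

theorem circleAverage_circleAverage_poissonKernel_mul {g : ℂ → ℝ} (hr : |r| < R)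
    (hg : ContinuousOn g (sphere c R)) :
    circleAverage (fun w => circleAverage (poissonKernel c w * g) c R) c r =
      circleAverage g c R :=
  calc circleAverage (fun w => circleAverage (poissonKernel c w * g) c R) c r
      = circleAverage (fun z => circleAverage (fun w => poissonKernel c w z * g z) c r) c R :=
        circleAverage_circleAverage_comm (continuousOn_poissonKernel_mul hr hg)
    _ = circleAverage g c R := circleAverage_congr_sphere fun z hz => by
        rw [abs_of_pos ((abs_nonneg r).trans_lt hr)] at hz
        simp only [mul_comm _ (g z), ← smul_eq_mul, circleAverage_fun_smul]
        rw [circleAverage_poissonKernel_left hr hz, smul_eq_mul, mul_one]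

theorem circleAverage_poissonKernel_smul [CompleteSpace F]
    (hf : HarmonicContOnCl f (ball c R)) (hw : w ∈ ball c R) :
    circleAverage (poissonKernel c w • f) c R = f w := by
  have hR : |R| = R := abs_of_pos (pos_of_mem_ball hw)
  have hint : CircleIntegrable (poissonKernel c w • f) c R := by
    refine ContinuousOn.circleIntegrable' ?_
    rw [hR]
    exact (continuousOn_poissonKernel_sphere hw).smul
      (hf.continuousOn_ball.mono sphere_subset_closedBall)
  rw [SeparatingDual.eq_iff_forall_dual_eq (R := ℝ)]
  intro L
  rw [← L.circleAverage_comp_comm hint, ← Function.comp_apply (f := L) (g := f),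
    ← (hf.comp_CLM L).circleAverage_poissonKernel_smul hw]
  congr 1
  ext z
  simp

end PoissonKernel

section ConvexFunction

variable [CompleteSpace F] {Φ : F → ℝ} {f : ℂ → F} {c w : ℂ} {r R : ℝ}

theorem map_le_circleAverage_poissonKernel_mul (hΦ : ConvexOn ℝ univ Φ) (hΦc : Continuous Φ)
    (hf : HarmonicContOnCl f (ball c R)) (hw : w ∈ ball c R) :
    Φ (f w) ≤ circleAverage (poissonKernel c w * Φ ∘ f) c R := by
  have hR : 0 ≤ R := (pos_of_mem_ball hw).le
  have hP := continuousOn_poissonKernel_sphere hw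
  have hf_sphere : ContinuousOn f (sphere c R) :=
    hf.continuousOn_ball.mono sphere_subset_closedBall
  have hP_nonneg : ∀ z ∈ sphere c |R|, 0 ≤ poissonKernel c w z := fun z hz => by
    rw [abs_of_nonneg hR, mem_sphere_iff_norm] at hz
    exact poissonKernel_nonneg (hz ▸ (mem_ball_iff_norm.1 hw).le)
  rw [← circleAverage_poissonKernel_smul hf hw]
  exact map_circleAverage_smul_le_of_convexOn hΦ hΦc hP_nonneg (circleAverage_poissonKernel hw)
    ((hP.smul hf_sphere).circleIntegrable hR)
    ((hP.mul (hΦc.comp_continuousOn hf_sphere)).circleIntegrable hR)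

theorem circleAverage_comp_le_of_abs_le (hΦ : ConvexOn ℝ univ Φ) (hΦc : Continuous Φ)
    (hf : HarmonicContOnCl f (ball c R)) (hr : |r| ≤ R) :
    circleAverage (Φ ∘ f) c r ≤ circleAverage (Φ ∘ f) c R := by
  obtain rfl | hr := hr.eq_or_lt
  · rw [circleAverage_abs_radius]
  have hΦf : ContinuousOn (Φ ∘ f) (closedBall c R) := hΦc.comp_continuousOn hf.continuousOn_ball
  have hΦf_sphere : ContinuousOn (Φ ∘ f) (sphere c R) := hΦf.mono sphere_subset_closedBall
  rw [← circleAverage_circleAverage_poissonKernel_mul hr hΦf_sphere]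
  refine circleAverage_mono (ContinuousOn.circleIntegrable' (hΦf.mono ?_))
    (circleIntegrable_circleAverage (continuousOn_poissonKernel_mul hr hΦf_sphere)) fun w hw => ?_
  · exact sphere_subset_closedBall.trans (closedBall_subset_closedBall hr.le)
  · exact map_le_circleAverage_poissonKernel_mul hΦ hΦc hf (sphere_subset_ball hr hw)

end ConvexFunction

section PolarCoordinates

variable {g : ℂ → F} {c : ℂ} {R : ℝ}

theorem complex_polarCoord_symm_eq_circleMap (p : ℝ × ℝ) :
    Complex.polarCoord.symm p = circleMap 0 p.1 p.2 := by
  simp [circleMap_zero, Complex.exp_mul_I]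

theorem setIntegral_ball_eq_setIntegral_prod_circleMap (g : ℂ → F) (c : ℂ) (R : ℝ) :
    ∫ z in ball c R, g z =
      ∫ p in Ioo 0 R ×ˢ Ioo (-π) π, p.1 • g (circleMap c p.1 p.2) := by
  have hind (p : ℝ × ℝ) :
      polarCoord.target.indicator
        (fun p => p.1 • (ball c R).indicator g (Complex.polarCoord.symm p + c)) p =
      (Ioo 0 R ×ˢ Ioo (-π) π).indicator (fun p => p.1 • g (circleMap c p.1 p.2)) p := by
    have hmap : Complex.polarCoord.symm p + c = circleMap c p.1 p.2 := by
      rw [complex_polarCoord_symm_eq_circleMap, circleMap_zero, circleMap, add_comm]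
    have hball (hp : 0 < p.1) : circleMap c p.1 p.2 ∈ ball c R ↔ p.1 < R := by
      rw [mem_ball_iff_norm, circleMap_sub_center, norm_circleMap_zero, abs_of_pos hp]
    simp only [hmap, indicator, polarCoord_target, mem_prod, mem_Ioi, mem_Ioo]
    grind [smul_zero]
  rw [← integral_indicator measurableSet_ball, ← integral_add_right_eq_self _ c,
    ← Complex.integral_comp_polarCoord_symm,
    ← integral_indicator polarCoord.open_target.measurableSet,
    ← integral_indicator (measurableSet_Ioo.prod measurableSet_Ioo)]
  exact integral_congr_ae (.of_forall hind)

theorem setIntegral_Ioo_circleMap (g : ℂ → F) (c : ℂ) (r : ℝ) :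
    ∫ θ in Ioo (-π) π, g (circleMap c r θ) = (2 * π) • circleAverage g c r := by
  rw [circleAverage_eq_integral_add (-π), smul_inv_smul₀ two_pi_pos.ne',
    intervalIntegral.integral_comp_add_right (fun θ => g (circleMap c r θ)),
    ← integral_Ioc_eq_integral_Ioo, ← intervalIntegral.integral_of_le (by linarith [pi_pos])]
  ring_nf

theorem setIntegral_ball_eq_integral_smul_circleAverage (hR : 0 ≤ R)
    (hg : ContinuousOn g (closedBall c R)) :
    ∫ z in ball c R, g z = ∫ r in 0..R, (2 * π * r) • circleAverage g c r := by
  have hcont : ContinuousOn (fun p : ℝ × ℝ => p.1 • g (circleMap c p.1 p.2))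
      (Icc 0 R ×ˢ Icc (-π) π) := by
    refine continuousOn_fst.smul (hg.comp (by fun_prop) ?_)
    rintro p ⟨⟨hp_nonneg, hp_le⟩, -⟩
    simpa [dist_eq_norm, abs_of_nonneg hp_nonneg] using hp_le
  have hint : IntegrableOn (fun p : ℝ × ℝ => p.1 • g (circleMap c p.1 p.2))
      (Ioo 0 R ×ˢ Ioo (-π) π) (volume.prod volume) :=
    (hcont.integrableOn_compact (isCompact_Icc.prod isCompact_Icc)).mono_set
      (prod_mono Ioo_subset_Icc_self Ioo_subset_Icc_self)
  rw [setIntegral_ball_eq_setIntegral_prod_circleMap, Measure.volume_eq_prod,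
    setIntegral_prod _ hint, intervalIntegral.integral_of_le hR, integral_Ioc_eq_integral_Ioo]
  simp only [integral_smul, setIntegral_Ioo_circleMap, smul_smul, mul_comm]

end PolarCoordinates

theorem setIntegral_ball_comp_le_circleAverage [CompleteSpace F] {Φ : F → ℝ} {f : ℂ → F} {c : ℂ}
    {R : ℝ} (hR : 0 ≤ R) (hΦ : ConvexOn ℝ univ Φ) (hΦc : Continuous Φ)
    (hf : HarmonicContOnCl f (ball c R)) :
    ∫ z in ball c R, Φ (f z) ≤ π * R ^ 2 * circleAverage (Φ ∘ f) c R := by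
  have hΦf : ContinuousOn (Φ ∘ f) (closedBall c R) := hΦc.comp_continuousOn hf.continuousOn_ball
  calc ∫ z in ball c R, Φ (f z)
      = ∫ r in 0..R, 2 * π * r * circleAverage (Φ ∘ f) c r :=
        setIntegral_ball_eq_integral_smul_circleAverage hR hΦf
    _ ≤ ∫ r in 0..R, 2 * π * r * circleAverage (Φ ∘ f) c R := by
        refine intervalIntegral.integral_mono_on hR ?_
          (Continuous.intervalIntegrable (by fun_prop) _ _) fun r hr => ?_
        · refine ContinuousOn.intervalIntegrable_of_Icc hR ?_
          exact .mul (by fun_prop) (continuousOn_circleAverage_of_closedBall hΦf)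
        · have := hr.1
          gcongr
          exact circleAverage_comp_le_of_abs_le hΦ hΦc hf (by simpa [abs_of_nonneg hr.1] using hr.2)
    _ = π * R ^ 2 * circleAverage (Φ ∘ f) c R := by
        rw [intervalIntegral.integral_mul_const, intervalIntegral.integral_const_mul, integral_id]
        ring

section Laplacian

variable {E E' : Type*} [NormedAddCommGroup E] [InnerProductSpace ℝ E] [FiniteDimensional ℝ E]
  [NormedAddCommGroup E'] [InnerProductSpace ℝ E'] [FiniteDimensional ℝ E']

theorem laplacian_comp_linearIsometryEquiv (e : E ≃ₗᵢ[ℝ] E') (f : E' → F) :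
    Δ (f ∘ e) = Δ f ∘ e := by
  let b := stdOrthonormalBasis ℝ E
  ext x
  have hcomp (v : E) : iteratedFDeriv ℝ 2 (f ∘ e) x ![v, v] =
      iteratedFDeriv ℝ 2 f (e x) ![e v, e v] := by
    have h := e.toContinuousLinearEquiv.iteratedFDerivWithin_comp_right f (s := univ)
      uniqueDiffOn_univ (mem_univ (e x)) 2
    simp only [preimage_univ, iteratedFDerivWithin_univ] at h
    refine (congrArg (· ![v, v]) h).trans ?_
    rw [ContinuousMultilinearMap.compContinuousLinearMap_apply]
    congr 1
    ext i
    fin_cases i <;> rfl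
  simp only [laplacian_eq_iteratedFDeriv_orthonormalBasis _ b,
    laplacian_eq_iteratedFDeriv_orthonormalBasis _ (b.map e), hcomp, Function.comp_apply,
    OrthonormalBasis.map_apply]

theorem harmonicContOnCl_comp_linearIsometryEquiv {f : E' → F} {s : Set E'}
    (hf : HarmonicContOnCl f s) (e : E ≃ₗᵢ[ℝ] E') : HarmonicContOnCl (f ∘ e) (e ⁻¹' s) where
  harmonicOnNhd x hx := by
    obtain ⟨hf_diff, hf_lap⟩ := hf.harmonicOnNhd (e x) hx
    refine ⟨hf_diff.comp x e.contDiff.contDiffAt, ?_⟩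
    rw [laplacian_comp_linearIsometryEquiv]
    exact hf_lap.comp_tendsto e.continuous.continuousAt
  continuousOn := by
    rw [← e.coe_toHomeomorph, ← e.toHomeomorph.preimage_closure]
    exact hf.continuousOn.comp e.continuous.continuousOn (mapsTo_preimage _ _)

theorem harmonicOnNhd_of_sum_fderiv_fderiv_eq_zero {ι : Type*} [Fintype ι]
    (b : OrthonormalBasis ι ℝ E) {f : E → F} {U : Set E} (hU : IsOpen U) (hf : ContDiffOn ℝ 2 f U)
    (hsum : ∀ x ∈ U, ∑ i, fderiv ℝ (fun y => fderiv ℝ f y (b i)) x (b i) = 0) :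
    HarmonicOnNhd f U := by
  have hlap : ∀ x ∈ U, Δ f x = 0 := fun x hx => by
    have hf' : DifferentiableAt ℝ (fderiv ℝ f) x :=
      ((hf.contDiffAt (hU.mem_nhds hx)).fderiv_right (m := 1) (by norm_num)).differentiableAt
        (by norm_num)
    rw [← hsum x hx, laplacian_eq_iteratedFDeriv_orthonormalBasis f b]
    simp [iteratedFDeriv_two_apply, fderiv_clm_apply hf' (differentiableAt_const _)]
  exact fun x hx => ⟨hf.contDiffAt (hU.mem_nhds hx), Filter.eventually_of_mem (hU.mem_nhds hx) hlap⟩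

end Laplacian

theorem complex_orthonormalBasisOneI_repr_circleMap (r θ : ℝ) :
    Complex.orthonormalBasisOneI.repr (circleMap 0 r θ) = circlePt r θ := by
  ext i
  fin_cases i <;>
    simp [circlePt, circleMap, Complex.exp_ofReal_mul_I_re, Complex.exp_ofReal_mul_I_im]

theorem stmt_11_general [CompleteSpace F] {Φ : F → ℝ} (hΦ : ConvexOn ℝ univ Φ)
    (hΦc : Continuous Φ) {ρ : ℝ} (hρ : 0 ≤ ρ) {u : EuclideanSpace ℝ (Fin 2) → F}
    (hu : HarmonicContOnCl u (ball 0 ρ)) :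
    ∫ x in ball 0 ρ, Φ (u x) ≤ ρ ^ 2 / 2 * ∫ θ in 0..2 * π, Φ (u (circlePt ρ θ)) := by
  let e := Complex.orthonormalBasisOneI.repr
  have hpreimage : e ⁻¹' ball 0 ρ = ball 0 ρ := by simp
  have hue : HarmonicContOnCl (u ∘ e) (ball 0 ρ) :=
    hpreimage ▸ harmonicContOnCl_comp_linearIsometryEquiv hu e
  calc ∫ x in ball 0 ρ, Φ (u x)
      = ∫ z in ball 0 ρ, Φ (u (e z)) := by
        rw [← hpreimage]
        exact (e.measurePreserving.setIntegral_preimage_emb e.toHomeomorph.measurableEmbedding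
          (fun x => Φ (u x)) (ball 0 ρ)).symm
    _ ≤ π * ρ ^ 2 * circleAverage (Φ ∘ u ∘ e) 0 ρ :=
        setIntegral_ball_comp_le_circleAverage hρ hΦ hΦc hue
    _ = ρ ^ 2 / 2 * ∫ θ in 0..2 * π, Φ (u (circlePt ρ θ)) := by
        simp only [circleAverage_def, Function.comp_apply, smul_eq_mul, e,
          complex_orthonormalBasisOneI_repr_circleMap]
        field_simp

end Proof

theorem stmt_11 (m : ℕ) (hm : 1 ≤ m) (ρ : ℝ) (hρ : 0 < ρ) (q : EuclideanSpace ℝ (Fin m))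
    (U : Set (EuclideanSpace ℝ (Fin 2))) (hU : IsOpen U)
    (hUball : Metric.closedBall (0 : EuclideanSpace ℝ (Fin 2)) ρ ⊆ U)
    (u : EuclideanSpace ℝ (Fin 2) → EuclideanSpace ℝ (Fin m))
    (hu : ContDiffOn ℝ 2 u U)
    (hharm : ∀ x ∈ U,
      fderiv ℝ (fun y => fderiv ℝ u y (EuclideanSpace.single 0 1)) x
          (EuclideanSpace.single 0 1) +
        fderiv ℝ (fun y => fderiv ℝ u y (EuclideanSpace.single 1 1)) x
          (EuclideanSpace.single 1 1) = 0) :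
    ∫ x in Metric.ball (0 : EuclideanSpace ℝ (Fin 2)) ρ, ‖u x - q‖ ^ 2 ≤
      ρ ^ 2 / 2 * ∫ θ in (0 : ℝ)..(2 * Real.pi), ‖u (circlePt ρ θ) - q‖ ^ 2 := by
  have hu_harm : InnerProductSpace.HarmonicOnNhd u U :=
    harmonicOnNhd_of_sum_fderiv_fderiv_eq_zero (EuclideanSpace.basisFun (Fin 2) ℝ) hU hu
      (by simpa [Fin.sum_univ_two] using hharm)
  exact stmt_11_general (convexOn_norm_sub_sq q) (by fun_prop) hρ.le
    (hu_harm.mono (Metric.closure_ball_subset_closedBall.trans hUball)).harmonicContOnCl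
end
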